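/- Let x₀ be an interior point of I and let f, g, h : I → ℝ be continuous and strictly monotone. Suppose f and g are differentiable at x₀ and that A^[f] ≤ A^[h] ≤ A^[g]. Then h is differentiable at x₀. -/

import Mathlib

/-!
Replacing a generator by its negative changes neither its means nor its differentiability, so all
three generators may be taken strictly increasing. Comparing two-point means and using continuity,
`A^[f] ≤ A^[h]` says that `h` is a convex function of `f`: the quotients
`(h y - h x₀) / (f y - f x₀)` increase with `y` (`MidLE.three_slope`), hence have one-sided limits
`0 < L₋ ≤ L₊` at `x₀` (`MidLE.exists_limits`). Likewise `(g y - g x₀) / (h y - h x₀)` has one-sided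
limits `0 < K₋ ≤ K₊`. Now `h` has one-sided derivatives `L₋ f'(x₀)` and `L₊ f'(x₀)`, and `g` has
one-sided derivatives `K₋ L₋ f'(x₀)` and `K₊ L₊ f'(x₀)`, which coincide. If `f'(x₀) = 0`, both
one-sided derivatives of `h` vanish; otherwise `K₋ L₋ = K₊ L₊`, which forces `L₋ = L₊`.
-/


open Set Function Filter

/-- The quasi-arithmetic mean generated by `f` on the interval `I`,
applied to a vector `a ∈ Iⁿ`: `f⁻¹((f a₁ + ⋯ + f aₙ)/n)`, where the
inverse of `f` is taken on `I`. -/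
noncomputable def qam (I : Set ℝ) (f : ℝ → ℝ) {n : ℕ} (a : Fin n → ℝ) : ℝ :=
  Function.invFunOn f I ((∑ i, f (a i)) / n)

/-- The natural (pointwise) partial order on quasi-arithmetic means:
`A^[f] ≤ A^[g]` iff `A^[f](a) ≤ A^[g](a)` for every `n ≥ 1` and every `a ∈ Iⁿ`. -/
def qamLE (I : Set ℝ) (f g : ℝ → ℝ) : Prop :=
  ∀ n : ℕ, 1 ≤ n → ∀ a : Fin n → ℝ, (∀ i, a i ∈ I) → qam I f a ≤ qam I g a

/-- `A^[f] = A^[g]` : equality of the two quasi-arithmetic means as means. -/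
def qamEQ (I : Set ℝ) (f g : ℝ → ℝ) : Prop :=
  ∀ n : ℕ, 1 ≤ n → ∀ a : Fin n → ℝ, (∀ i, a i ∈ I) → qam I f a = qam I g a

/-- `f` is strictly monotone on `I` (strictly increasing or strictly decreasing). -/
def StrictMonoOrAntiOn (f : ℝ → ℝ) (I : Set ℝ) : Prop :=
  StrictMonoOn f I ∨ StrictAntiOn f I

open Topology

/-- The inequality `A^[f] ≤ A^[h]` for two-point means: `t` is the `f`-mean and `u` the `h`-mean of
`a` and `b`. Phrased without inverse functions, it is visibly unaffected by negating `f` or `h`. -/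
def MidLE (I : Set ℝ) (f h : ℝ → ℝ) : Prop :=
  ∀ a ∈ I, ∀ b ∈ I, ∀ t ∈ I, ∀ u ∈ I, f a + f b = 2 * f t → h a + h b = 2 * h u → t ≤ u

theorem StrictMonoOrAntiOn.injOn {I : Set ℝ} {f : ℝ → ℝ} (hf : StrictMonoOrAntiOn f I) :
    InjOn f I :=
  hf.elim StrictMonoOn.injOn StrictAntiOn.injOn

theorem qam_pair {I : Set ℝ} {f : ℝ → ℝ} (hf : InjOn f I) {a b t : ℝ} (ht : t ∈ I)
    (h : f a + f b = 2 * f t) : qam I f ![a, b] = t := by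
  have e : (∑ i, f (![a, b] i)) / ((2 : ℕ) : ℝ) = f t := by
    simp [Fin.sum_univ_two, h]
  unfold qam
  rw [e]
  exact hf (invFunOn_mem ⟨t, ht, rfl⟩) ht (invFunOn_eq ⟨t, ht, rfl⟩)

theorem qamLE.midLE {I : Set ℝ} {f h : ℝ → ℝ} (hf : InjOn f I) (hh : InjOn h I)
    (H : qamLE I f h) : MidLE I f h := by
  intro a ha b hb t ht u hu h1 h2
  have := H 2 (by norm_num) ![a, b] (by intro i; fin_cases i <;> simpa)
  rwa [qam_pair hf ht h1, qam_pair hh hu h2] at this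

theorem MidLE.neg_left {I : Set ℝ} {f h : ℝ → ℝ} (H : MidLE I f h) : MidLE I (-f) h := by
  intro a ha b hb t ht u hu h1 h2
  simp only [Pi.neg_apply] at h1
  exact H a ha b hb t ht u hu (by linarith) h2

theorem MidLE.neg_right {I : Set ℝ} {f h : ℝ → ℝ} (H : MidLE I f h) : MidLE I f (-h) := by
  intro a ha b hb t ht u hu h1 h2
  simp only [Pi.neg_apply] at h2
  exact H a ha b hb t ht u hu h1 (by linarith)

theorem MidLE.midpoint {I : Set ℝ} (hI : I.OrdConnected) {f h : ℝ → ℝ}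
    (hhc : ContinuousOn h I) (hh : StrictMonoOn h I) (H : MidLE I f h)
    {a b t : ℝ} (ha : a ∈ I) (hb : b ∈ I) (ht : t ∈ I) (hab : a ≤ b)
    (e : f a + f b = 2 * f t) : 2 * h t ≤ h a + h b := by
  have hsub : Icc a b ⊆ I := hI.out ha hb
  have hle : h a ≤ h b := hh.monotoneOn ha hb hab
  obtain ⟨u, hu, hu'⟩ := intermediate_value_Icc hab (hhc.mono hsub)
    (show (h a + h b) / 2 ∈ Icc (h a) (h b) from ⟨by linarith, by linarith⟩)
  have := hh.monotoneOn ht (hsub hu) (H a ha b hb t ht u (hsub hu) e (by linarith))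
  linarith

/-- Convexity of `h ∘ f⁻¹`, expressed on the chord from `x` to `y`. A midpoint-convex continuous
function lies below its chords: at the leftmost maximum of the deviation from the chord,
midpoint convexity would be violated if that maximum were positive. -/
theorem MidLE.below_chord {I : Set ℝ} (hI : I.OrdConnected) {f h : ℝ → ℝ}
    (hfc : ContinuousOn f I) (hf : StrictMonoOn f I)
    (hhc : ContinuousOn h I) (hh : StrictMonoOn h I) (H : MidLE I f h)
    {x s y : ℝ} (hx : x ∈ I) (hy : y ∈ I) (hs : s ∈ Icc x y) :
    (h s - h x) * (f y - f x) ≤ (h y - h x) * (f s - f x) := by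
  have hsub : Icc x y ⊆ I := hI.out hx hy
  have hxy : x ≤ y := hs.1.trans hs.2
  set d : ℝ → ℝ := fun s => (h s - h x) * (f y - f x) - (h y - h x) * (f s - f x) with hd
  have hdc : ContinuousOn d (Icc x y) := by
    have h1 := hfc.mono hsub
    have h2 := hhc.mono hsub
    fun_prop
  obtain ⟨m, hm, hmax⟩ := isCompact_Icc.exists_isMaxOn ⟨s, hs⟩ hdc
  have hcl : IsCompact (Icc x y ∩ d ⁻¹' {d m}) :=
    isCompact_Icc.of_isClosed_subset
      (hdc.preimage_isClosed_of_isClosed isClosed_Icc isClosed_singleton) inter_subset_left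
  obtain ⟨t, ⟨ht, htm⟩, hleast⟩ := hcl.exists_isLeast ⟨m, hm, rfl⟩
  have htm : d t = d m := htm
  suffices hle : d m ≤ 0 by
    have h1 : d s ≤ d m := hmax hs
    have h2 : d s ≤ 0 := h1.trans hle
    simp only [hd] at h2
    linarith
  by_contra! hpos
  have hdx : d x = 0 := by simp [hd]
  have hdy : d y = 0 := by simp only [hd]; ring
  have hxt : x < t := lt_of_le_of_ne ht.1 (by rintro rfl; linarith)
  have hty : t < y := lt_of_le_of_ne ht.2 (by rintro rfl; linarith)
  have f1 := hf hx (hsub ht) hxt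
  have f2 := hf (hsub ht) hy hty
  -- the largest step for which both `f t - δ` and `f t + δ` are values of `f` on `[x, y]`
  set δ := min (f t - f x) (f y - f t) with hδ
  have δpos : 0 < δ := lt_min (by linarith) (by linarith)
  have δ1 : δ ≤ f t - f x := min_le_left _ _
  have δ2 : δ ≤ f y - f t := min_le_right _ _
  obtain ⟨a, ha, fa⟩ := intermediate_value_Icc hxt.le
    (hfc.mono ((Icc_subset_Icc_right hty.le).trans hsub))
    (show f t - δ ∈ Icc (f x) (f t) from ⟨by linarith, by linarith⟩)
  obtain ⟨b, hb, fb⟩ := intermediate_value_Icc hty.le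
    (hfc.mono ((Icc_subset_Icc_left hxt.le).trans hsub))
    (show f t + δ ∈ Icc (f t) (f y) from ⟨by linarith, by linarith⟩)
  have ha' : a ∈ Icc x y := ⟨ha.1, ha.2.trans hty.le⟩
  have hb' : b ∈ Icc x y := ⟨hxt.le.trans hb.1, hb.2⟩
  have hat : a < t := lt_of_le_of_ne ha.2 (by rintro rfl; linarith)
  have hmid := H.midpoint hI hhc hh (hsub ha') (hsub hb') (hsub ht) (ha.2.trans hb.1)
    (by linarith)
  have da : d a < d m := by
    refine lt_of_le_of_ne (hmax ha') fun e => ?_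
    exact absurd (hleast ⟨ha', e⟩) (not_le.2 hat)
  have db : d b ≤ d m := hmax hb'
  have key : 2 * d t ≤ d a + d b := by
    have h3 : 0 ≤ (h a + h b - 2 * h t) * (f y - f x) :=
      mul_nonneg (by linarith) (by linarith)
    have h4 : d a + d b - 2 * d t = (h a + h b - 2 * h t) * (f y - f x) := by
      simp only [hd]; rw [fa, fb]; ring
    linarith
  linarith

/-- The quotients `(h y - h x₀) / (f y - f x₀)` increase with `y`. -/
theorem MidLE.three_slope {I : Set ℝ} (hI : I.OrdConnected) {f h : ℝ → ℝ}
    (hfc : ContinuousOn f I) (hf : StrictMonoOn f I)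
    (hhc : ContinuousOn h I) (hh : StrictMonoOn h I) (H : MidLE I f h)
    {x₀ : ℝ} (hx₀ : x₀ ∈ I) :
    MonotoneOn (fun y => (h y - h x₀) / (f y - f x₀)) (I \ {x₀}) := by
  rintro y ⟨hy, hy0⟩ z ⟨hz, hz0⟩ hyz
  simp only [mem_singleton_iff] at hy0 hz0
  rcases lt_or_gt_of_ne hy0 with h1 | h1 <;> rcases lt_or_gt_of_ne hz0 with h2 | h2
  · have k := H.below_chord hI hfc hf hhc hh hy hx₀ ⟨hyz, h2.le⟩
    have f1 := hf hy hx₀ h1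
    have f2 := hf hz hx₀ h2
    show (h y - h x₀) / (f y - f x₀) ≤ (h z - h x₀) / (f z - f x₀)
    rw [← neg_div_neg_eq (h y - h x₀), ← neg_div_neg_eq (h z - h x₀),
      div_le_div_iff₀ (by linarith) (by linarith)]
    nlinarith
  · have k := H.below_chord hI hfc hf hhc hh hy hz ⟨h1.le, h2.le⟩
    have f1 := hf hy hx₀ h1
    have f2 := hf hx₀ hz h2
    show (h y - h x₀) / (f y - f x₀) ≤ (h z - h x₀) / (f z - f x₀)
    rw [← neg_div_neg_eq (h y - h x₀), div_le_div_iff₀ (by linarith) (by linarith)]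
    nlinarith
  · linarith
  · have k := H.below_chord hI hfc hf hhc hh hx₀ hz ⟨h1.le, hyz⟩
    have f1 := hf hx₀ hy h1
    have f2 := hf hx₀ hz h2
    show (h y - h x₀) / (f y - f x₀) ≤ (h z - h x₀) / (f z - f x₀)
    rw [div_le_div_iff₀ (by linarith) (by linarith)]
    nlinarith

theorem quot_pos {I : Set ℝ} {f h : ℝ → ℝ} (hf : StrictMonoOn f I) (hh : StrictMonoOn h I)
    {x₀ y : ℝ} (hx₀ : x₀ ∈ I) (hy : y ∈ I) (hne : y ≠ x₀) :
    0 < (h y - h x₀) / (f y - f x₀) := by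
  rcases lt_or_gt_of_ne hne with h1 | h1
  · exact div_pos_of_neg_of_neg (by linarith [hh hy hx₀ h1]) (by linarith [hf hy hx₀ h1])
  · exact div_pos (by linarith [hh hx₀ hy h1]) (by linarith [hf hx₀ hy h1])

/-- One-sided limits of the difference quotients of `h` with respect to `f`; they are the one-sided
derivatives of the convex function `h ∘ f⁻¹` at `f x₀`. -/
theorem MidLE.exists_limits {I : Set ℝ} (hI : I.OrdConnected) {f h : ℝ → ℝ}
    (hfc : ContinuousOn f I) (hf : StrictMonoOn f I)
    (hhc : ContinuousOn h I) (hh : StrictMonoOn h I) (H : MidLE I f h)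
    {x₀ : ℝ} (hx₀ : x₀ ∈ interior I) :
    ∃ l r : ℝ, 0 < l ∧ l ≤ r ∧
      Tendsto (fun y => (h y - h x₀) / (f y - f x₀)) (𝓝[<] x₀) (𝓝 l) ∧
      Tendsto (fun y => (h y - h x₀) / (f y - f x₀)) (𝓝[>] x₀) (𝓝 r) := by
  have hx : x₀ ∈ I := interior_subset hx₀
  obtain ⟨a, b, hab, hsub⟩ := mem_nhds_iff_exists_Ioo_subset.1 (mem_interior_iff_mem_nhds.1 hx₀)
  have hm := H.three_slope hI hfc hf hhc hh hx
  set S : ℝ → ℝ := fun y => (h y - h x₀) / (f y - f x₀) with hS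
  have hl : Ioo a x₀ ⊆ I \ {x₀} := fun y hy =>
    ⟨hsub ⟨hy.1, hy.2.trans hab.2⟩, hy.2.ne⟩
  have hr : Ioo x₀ b ⊆ I \ {x₀} := fun y hy =>
    ⟨hsub ⟨hab.1.trans hy.1, hy.2⟩, hy.1.ne'⟩
  obtain ⟨p, hp⟩ := exists_between hab.1
  obtain ⟨q, hq⟩ := exists_between hab.2
  have hcross : ∀ y ∈ Ioo a x₀, ∀ z ∈ Ioo x₀ b, S y ≤ S z := fun y hy z hz =>
    hm (hl hy) (hr hz) (hy.2.trans hz.1).le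
  have ba : BddAbove (S '' Ioo a x₀) := ⟨S q, by
    rintro _ ⟨y, hy, rfl⟩; exact hcross y hy q hq⟩
  have bb : BddBelow (S '' Ioo x₀ b) := ⟨S p, by
    rintro _ ⟨y, hy, rfl⟩; exact hcross p hp y hy⟩
  refine ⟨sSup (S '' Ioo a x₀), sInf (S '' Ioo x₀ b), ?_, ?_, ?_, ?_⟩
  · exact (quot_pos hf hh hx (hl hp).1 (hl hp).2).trans_le (le_csSup ba ⟨p, hp, rfl⟩)
  · refine csSup_le ⟨_, p, hp, rfl⟩ ?_
    rintro _ ⟨y, hy, rfl⟩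
    refine le_csInf ⟨_, q, hq, rfl⟩ ?_
    rintro _ ⟨z, hz, rfl⟩
    exact hcross y hy z hz
  · exact MonotoneOn.tendsto_nhdsWithin_Ioo_left ⟨p, hp⟩ (hm.mono hl) ba
  · exact MonotoneOn.tendsto_nhdsWithin_Ioo_right ⟨q, hq⟩ (hm.mono hr) bb

theorem differentiableAt_of_strictMonoOn {I : Set ℝ} (hI : I.OrdConnected) {f g h : ℝ → ℝ}
    {x₀ : ℝ} (hx₀ : x₀ ∈ interior I)
    (hfc : ContinuousOn f I) (hgc : ContinuousOn g I) (hhc : ContinuousOn h I)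
    (hf : StrictMonoOn f I) (hg : StrictMonoOn g I) (hh : StrictMonoOn h I)
    (hfd : DifferentiableAt ℝ f x₀) (hgd : DifferentiableAt ℝ g x₀)
    (H₁ : MidLE I f h) (H₂ : MidLE I h g) : DifferentiableAt ℝ h x₀ := by
  have hx : x₀ ∈ I := interior_subset hx₀
  have hnhds : I ∈ 𝓝 x₀ := mem_interior_iff_mem_nhds.1 hx₀
  obtain ⟨l, r, l0, lr, hl, hr⟩ := H₁.exists_limits hI hfc hf hhc hh hx₀
  obtain ⟨l', r', l0', lr', hl', hr'⟩ := H₂.exists_limits hI hhc hh hgc hg hx₀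
  obtain ⟨c, hc⟩ : ∃ c, HasDerivAt f c x₀ := ⟨_, hfd.hasDerivAt⟩
  obtain ⟨e, he⟩ : ∃ e, HasDerivAt g e x₀ := ⟨_, hgd.hasDerivAt⟩
  rw [hasDerivAt_iff_tendsto_slope] at hc he
  have hLT : 𝓝[<] x₀ ≤ 𝓝[≠] x₀ := nhdsWithin_mono _ fun y hy => ne_of_lt hy
  have hGT : 𝓝[>] x₀ ≤ 𝓝[≠] x₀ := nhdsWithin_mono _ fun y hy => ne_of_gt hy
  have eh : ∀ᶠ y in 𝓝[≠] x₀, (h y - h x₀) / (f y - f x₀) * slope f x₀ y = slope h x₀ y := by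
    filter_upwards [self_mem_nhdsWithin, mem_nhdsWithin_of_mem_nhds hnhds] with y hy hyI
    have : f y - f x₀ ≠ 0 := sub_ne_zero.2 fun k => hy (hf.injOn hyI hx k)
    rw [slope_def_field, slope_def_field]
    field_simp
  have eg : ∀ᶠ y in 𝓝[≠] x₀, (g y - g x₀) / (h y - h x₀) * slope h x₀ y = slope g x₀ y := by
    filter_upwards [self_mem_nhdsWithin, mem_nhdsWithin_of_mem_nhds hnhds] with y hy hyI
    have : h y - h x₀ ≠ 0 := sub_ne_zero.2 fun k => hy (hh.injOn hyI hx k)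
    rw [slope_def_field, slope_def_field]
    field_simp
  have hhl : Tendsto (slope h x₀) (𝓝[<] x₀) (𝓝 (l * c)) :=
    (hl.mul (hc.mono_left hLT)).congr' (eh.filter_mono hLT)
  have hhr : Tendsto (slope h x₀) (𝓝[>] x₀) (𝓝 (r * c)) :=
    (hr.mul (hc.mono_left hGT)).congr' (eh.filter_mono hGT)
  have e1 : l' * (l * c) = e := tendsto_nhds_unique
    ((hl'.mul hhl).congr' (eg.filter_mono hLT)) (he.mono_left hLT)
  have e2 : r' * (r * c) = e := tendsto_nhds_unique
    ((hr'.mul hhr).congr' (eg.filter_mono hGT)) (he.mono_left hGT)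
  have key : l * c = r * c := by
    by_cases hc0 : c = 0
    · simp [hc0]
    have e3 : l' * l = r' * r := mul_right_cancel₀ hc0 (by linarith)
    have : l = r := by
      refine le_antisymm lr (le_of_not_gt fun hlt => ?_)
      nlinarith
    rw [this]
  refine HasDerivAt.differentiableAt (f' := r * c) ?_
  rw [hasDerivAt_iff_tendsto_slope, ← nhdsLT_sup_nhdsGT]
  exact Tendsto.sup (key ▸ hhl) hhr

/-- Theorem 4: if `f, g` are differentiable at an interior point `x₀`
and `A^[f] ≤ A^[h] ≤ A^[g]`, then `h` is differentiable at `x₀`. -/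
theorem differentiable_at_interval_type
    (I : Set ℝ) (hI : I.OrdConnected) (hInontriv : ∃ x ∈ I, ∃ y ∈ I, x < y)
    (x₀ : ℝ) (hx₀ : x₀ ∈ interior I)
    (f g h : ℝ → ℝ)
    (hfc : ContinuousOn f I) (hgc : ContinuousOn g I) (hhc : ContinuousOn h I)
    (hfm : StrictMonoOrAntiOn f I) (hgm : StrictMonoOrAntiOn g I)
    (hhm : StrictMonoOrAntiOn h I)
    (hfd : DifferentiableWithinAt ℝ f I x₀)
    (hgd : DifferentiableWithinAt ℝ g I x₀)
    (hle₁ : qamLE I f h) (hle₂ : qamLE I h g) :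
    DifferentiableWithinAt ℝ h I x₀ := by
  have hnhds : I ∈ 𝓝 x₀ := mem_interior_iff_mem_nhds.1 hx₀
  have H₁ := hle₁.midLE hfm.injOn hhm.injOn
  have H₂ := hle₂.midLE hhm.injOn hgm.injOn
  replace hfd := hfd.differentiableAt hnhds
  replace hgd := hgd.differentiableAt hnhds
  clear hle₁ hle₂
  apply DifferentiableAt.differentiableWithinAt
  wlog hf : StrictMonoOn f I generalizing f
  · have hf' := (hfm.resolve_left hf).neg
    exact this (-f) hfc.neg (Or.inl hf') H₁.neg_left hfd.neg hf'
  wlog hg : StrictMonoOn g I generalizing g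
  · have hg' := (hgm.resolve_left hg).neg
    exact this (-g) hgc.neg (Or.inl hg') H₂.neg_right hgd.neg hg'
  wlog hh : StrictMonoOn h I generalizing h
  · have hh' := (hhm.resolve_left hh).neg
    have := this (-h) hhc.neg (Or.inl hh') H₁.neg_right H₂.neg_left hh'
    simpa using this.neg
  exact differentiableAt_of_strictMonoOn hI hx₀ hfc hgc hhc hf hg hh hfd hgd H₁ H₂
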